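/- arXiv:2201.02804 — 3 statements merged into one kernel-verified Lean document; each statement's English description precedes it below -/
import Mathlib

section
/- (Equilibrium bribe size, equation (6).) Let n ≥ 1 be a natural number, x ∈ (0,1), 0 ≤ p_h < p ≤ 1, P, F_O, F_C ≥ 0. Assume D := n x(1 − p_h) + x − p > 0 and A := P + p(F_O − F_C) + p_h n F_O > 0. Define the Nash product G(B) = [U_C(B) − U_O(B)]·(p − p_h)·B. Then B* = n x·A / (2D) is strictly positive and is the unique global maximizer of G over B ∈ [0, ∞). -/
/-- The citizen's utility from paying a bribe `B`:
`U_C(B) = P - B - p F_C + p_h (B + n F_O)`. -/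
noncomputable def UC (P p ph FC FO B : ℝ) (n : ℕ) : ℝ :=
  P - B - p * FC + ph * (B + n * FO)

/-- The network's expected utility `U_O(B) = B/n - p(F_O + B/(n x))`. -/
noncomputable def UO (x p FO B : ℝ) (n : ℕ) : ℝ :=
  B / n - p * (FO + B / (n * x))

/-- Equation (6): the equilibrium bribe size
`B* = n x [P + p(F_O - F_C) + p_h n F_O] / (2[n x (1 - p_h) + x - p])`
is positive and is the unique global maximizer over `[0, ∞)` of the Nash
product `G(B) = [U_C(B) - U_O(B)] (p - p_h) B`. -/
theorem equilibrium_bribe_size (n : ℕ) (hn : 1 ≤ n) (x p ph P FO FC : ℝ)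
    (hx : x ∈ Set.Ioo (0 : ℝ) 1) (hph : 0 ≤ ph) (hphp : ph < p) (hp : p ≤ 1)
    (hP : 0 ≤ P) (hFO : 0 ≤ FO) (hFC : 0 ≤ FC)
    (hD : 0 < n * x * (1 - ph) + x - p)
    (hA : 0 < P + p * (FO - FC) + ph * n * FO) :
    0 < n * x * (P + p * (FO - FC) + ph * n * FO) /
        (2 * (n * x * (1 - ph) + x - p)) ∧
    ∀ B ∈ Set.Ici (0 : ℝ),
      B ≠ n * x * (P + p * (FO - FC) + ph * n * FO) /
            (2 * (n * x * (1 - ph) + x - p)) →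
      (UC P p ph FC FO B n - UO x p FO B n) * ((p - ph) * B) <
        (UC P p ph FC FO
              (n * x * (P + p * (FO - FC) + ph * n * FO) /
                (2 * (n * x * (1 - ph) + x - p))) n -
            UO x p FO
              (n * x * (P + p * (FO - FC) + ph * n * FO) /
                (2 * (n * x * (1 - ph) + x - p))) n) *
          ((p - ph) *
            (n * x * (P + p * (FO - FC) + ph * n * FO) /
              (2 * (n * x * (1 - ph) + x - p)))) := by
  obtain ⟨hx0, hx1⟩ := hx
  have hn0 : (0 : ℝ) < n := by exact_mod_cast hn
  have key : ∀ B : ℝ, UC P p ph FC FO B n - UO x p FO B n =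
      (P + p * (FO - FC) + ph * n * FO) - (n * x * (1 - ph) + x - p) / (n * x) * B := by
    intro B
    unfold UC UO
    field_simp
    ring
  simp only [key]
  generalize P + p * (FO - FC) + ph * n * FO = A at *
  generalize n * x * (1 - ph) + x - p = D at *
  refine ⟨by positivity, ?_⟩
  intro B _ hne
  have hAeq : A = 2 * (D / (n * x)) * (n * x * A / (2 * D)) := by
    field_simp
  have hc : 0 < D / (n * x) := by positivity
  generalize n * x * A / (2 * D) = b at *
  generalize D / (n * x) = c at *
  have h1 : 0 < (B - b) ^ 2 := by
    have := sub_ne_zero.mpr hne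
    positivity
  have h2 : 0 < (p - ph) * c * (B - b) ^ 2 :=
    mul_pos (mul_pos (sub_pos.mpr hphp) hc) h1
  rw [hAeq]
  nlinarith [h2]
end

section
/- (Comparative statics in the detection probability, equation (11).) Let n ≥ 1, x ∈ (0,1), p_h ∈ [0,1), P ≥ 0, F_O ≥ F_C ≥ 0. Regard B*(p) = n x[P + p(F_O − F_C) + p_h n F_O] / (2[n x(1−p_h) + x − p]) as a function of p on the open interval where n x(1−p_h) + x − p > 0. Then dB*/dp = n x·[(F_O − F_C)(n x(1−p_h) + x) + P + p_h n F_O] / (2[n x(1−p_h) + x − p]^2) ≥ 0; in particular B* is monotonically nondecreasing in p on this interval. -/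
/-- Equation (11): comparative statics of the equilibrium bribe size in the
detection probability `p`, holding `p_h` fixed, on the open interval where
`n x (1 - p_h) + x - p > 0`.  The derivative is
`n x [(F_O - F_C)(n x (1 - p_h) + x) + P + p_h n F_O] / (2[n x(1-p_h)+x-p]^2) ≥ 0`,
so `B*` is monotonically nondecreasing in `p` there. -/
theorem bribe_monotone_in_detection_prob (n : ℕ) (hn : 1 ≤ n) (x ph P FO FC : ℝ)
    (hx : x ∈ Set.Ioo (0 : ℝ) 1) (hph : ph ∈ Set.Ico (0 : ℝ) 1)
    (hP : 0 ≤ P) (hFC : 0 ≤ FC) (hFOC : FC ≤ FO) :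
    (∀ p ∈ {q : ℝ | 0 < n * x * (1 - ph) + x - q},
      HasDerivAt
        (fun q : ℝ => n * x * (P + q * (FO - FC) + ph * n * FO) /
          (2 * (n * x * (1 - ph) + x - q)))
        (n * x * ((FO - FC) * (n * x * (1 - ph) + x) + P + ph * n * FO) /
          (2 * (n * x * (1 - ph) + x - p) ^ 2)) p ∧
      0 ≤ n * x * ((FO - FC) * (n * x * (1 - ph) + x) + P + ph * n * FO) /
        (2 * (n * x * (1 - ph) + x - p) ^ 2)) ∧
    MonotoneOn
      (fun q : ℝ => n * x * (P + q * (FO - FC) + ph * n * FO) /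
        (2 * (n * x * (1 - ph) + x - q)))
      {q : ℝ | 0 < n * x * (1 - ph) + x - q} := by
  obtain ⟨hx0, hx1⟩ := hx
  obtain ⟨hp0, hp1⟩ := hph
  have hFO : 0 ≤ FO := hFC.trans hFOC
  have hd : 0 ≤ FO - FC := sub_nonneg.2 hFOC
  have hp : 0 ≤ 1 - ph := by linarith
  have key : ∀ p ∈ {q : ℝ | 0 < n * x * (1 - ph) + x - q},
      HasDerivAt
        (fun q : ℝ => n * x * (P + q * (FO - FC) + ph * n * FO) /
          (2 * (n * x * (1 - ph) + x - q)))
        (n * x * ((FO - FC) * (n * x * (1 - ph) + x) + P + ph * n * FO) /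
          (2 * (n * x * (1 - ph) + x - p) ^ 2)) p ∧
      0 ≤ n * x * ((FO - FC) * (n * x * (1 - ph) + x) + P + ph * n * FO) /
        (2 * (n * x * (1 - ph) + x - p) ^ 2) := by
    intro p hpD
    have hD : n * x * (1 - ph) + x - p ≠ 0 := ne_of_gt hpD
    refine ⟨?_, by positivity⟩
    have h1 : HasDerivAt (fun q : ℝ => n * x * (P + q * (FO - FC) + ph * n * FO))
        (n * x * (1 * (FO - FC))) p :=
      ((((hasDerivAt_id p).mul_const (FO - FC)).const_add P).add_const _).const_mul _
    have h2 : HasDerivAt (fun q : ℝ => 2 * (n * x * (1 - ph) + x - q)) (2 * (-1)) p :=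
      ((hasDerivAt_id p).const_sub _).const_mul _
    have h3 := h1.fun_div h2 (mul_ne_zero two_ne_zero hD)
    refine h3.congr_deriv ?_
    rw [div_eq_div_iff (by positivity) (by positivity)]
    ring
  refine ⟨key, ?_⟩
  have hset : {q : ℝ | 0 < n * x * (1 - ph) + x - q} = Set.Iio (n * x * (1 - ph) + x) := by
    ext q
    simp only [Set.mem_ofPred_eq, Set.mem_Iio, sub_pos]
  rw [hset] at key ⊢
  refine monotoneOn_of_deriv_nonneg (convex_Iio _)
    (fun p hp => (key p hp).1.continuousAt.continuousWithinAt) ?_ ?_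
  · rw [interior_Iio]
    exact fun p hp => (key p hp).1.differentiableAt.differentiableWithinAt
  · rw [interior_Iio]
    intro p hp
    rw [(key p hp).1.deriv]
    exact (key p hp).2
end

section
/- (Comparative statics in network size, equation (13).) Let x ∈ (0,1), 0 ≤ p ≤ x, p_h ∈ [0,1), P ≥ 0, F_O ≥ F_C ≥ 0. Regard B*(n) = n x[P + p(F_O − F_C) + p_h n F_O] / (2[n x(1−p_h) + x − p]) as a function of a real variable n on the region n ≥ 1 (where n x(1−p_h) + x − p > 0 automatically holds). Then dB*/dn = { x(x − p)·[P + p(F_O − F_C) + 2 p_h n F_O] + p_h n² x² F_O(1 − p_h) } / (2[n x(1−p_h) + x − p]^2) ≥ 0; in particular B* is monotonically nondecreasing in n. -/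
/-- Equation (13): comparative statics of the equilibrium bribe size in the
(real-valued) network size `n`, on the region `n ≥ 1`, where
`n x (1 - p_h) + x - p > 0` holds automatically.  The derivative is
`{x(x-p)[P + p(F_O - F_C) + 2 p_h n F_O] + p_h n² x² F_O (1-p_h)} /
 (2[n x(1-p_h)+x-p]^2) ≥ 0`, so `B*` is monotonically nondecreasing in `n`. -/
theorem bribe_monotone_in_network_size (x p ph P FO FC : ℝ)
    (hx : x ∈ Set.Ioo (0 : ℝ) 1) (hp0 : 0 ≤ p) (hpx : p ≤ x)
    (hph : ph ∈ Set.Ico (0 : ℝ) 1) (hP : 0 ≤ P) (hFC : 0 ≤ FC) (hFOC : FC ≤ FO) :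
    (∀ n ∈ Set.Ici (1 : ℝ),
      0 < n * x * (1 - ph) + x - p ∧
      HasDerivAt
        (fun m : ℝ => m * x * (P + p * (FO - FC) + ph * m * FO) /
          (2 * (m * x * (1 - ph) + x - p)))
        ((x * (x - p) * (P + p * (FO - FC) + 2 * ph * n * FO) +
            ph * n ^ 2 * x ^ 2 * FO * (1 - ph)) /
          (2 * (n * x * (1 - ph) + x - p) ^ 2)) n ∧
      0 ≤ (x * (x - p) * (P + p * (FO - FC) + 2 * ph * n * FO) +
            ph * n ^ 2 * x ^ 2 * FO * (1 - ph)) /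
          (2 * (n * x * (1 - ph) + x - p) ^ 2)) ∧
    MonotoneOn
      (fun m : ℝ => m * x * (P + p * (FO - FC) + ph * m * FO) /
        (2 * (m * x * (1 - ph) + x - p)))
      (Set.Ici 1) := by
  obtain ⟨hx0, hx1⟩ := hx
  obtain ⟨hh0, hh1⟩ := hph
  have hd : 0 ≤ x - p := sub_nonneg.2 hpx
  have hc : 0 < 1 - ph := sub_pos.2 hh1
  have hF : 0 ≤ FO - FC := sub_nonneg.2 hFOC
  have hFO : 0 ≤ FO := hFC.trans hFOC
  have key : ∀ n ∈ Set.Ici (1 : ℝ),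
      0 < n * x * (1 - ph) + x - p ∧
      HasDerivAt
        (fun m : ℝ => m * x * (P + p * (FO - FC) + ph * m * FO) /
          (2 * (m * x * (1 - ph) + x - p)))
        ((x * (x - p) * (P + p * (FO - FC) + 2 * ph * n * FO) +
            ph * n ^ 2 * x ^ 2 * FO * (1 - ph)) /
          (2 * (n * x * (1 - ph) + x - p) ^ 2)) n ∧
      0 ≤ (x * (x - p) * (P + p * (FO - FC) + 2 * ph * n * FO) +
            ph * n ^ 2 * x ^ 2 * FO * (1 - ph)) /
          (2 * (n * x * (1 - ph) + x - p) ^ 2) := by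
    intro n hn
    have hn0 : 0 < n := lt_of_lt_of_le one_pos hn
    have hD : 0 < n * x * (1 - ph) + x - p := by
      have : 0 < n * x * (1 - ph) := by positivity
      linarith
    refine ⟨hD, ?_, by positivity⟩
    have hid := hasDerivAt_id' n
    have h1 := (hid.mul_const x).mul
      (((hid.const_mul ph).mul_const FO).const_add (P + p * (FO - FC)))
    have h2 := (((((hid.mul_const x).mul_const (1 - ph)).add_const x).sub_const p).const_mul 2)
    have h3 := h1.div h2 (by positivity)
    refine h3.congr_deriv ?_
    have hD' := hD.ne'
    simp only [Pi.mul_apply]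
    rw [div_eq_div_iff (by positivity) (by positivity)]
    ring
  refine ⟨key, ?_⟩
  refine monotoneOn_of_deriv_nonneg (convex_Ici 1)
    (fun n hn => (key n hn).2.1.continuousAt.continuousWithinAt)
    (fun n hn => (key n (interior_subset hn)).2.1.differentiableAt.differentiableWithinAt)
    (fun n hn => ?_)
  rw [(key n (interior_subset hn)).2.1.deriv]
  exact (key n (interior_subset hn)).2.2
end
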